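/- arXiv:2209.14979 — 2 statements merged into one kernel-verified Lean document; each statement's English description precedes it below -/
import Mathlib

section
/- Spin(7) acts transitively on the unit sphere of 𝕆: for all x, y ∈ 𝕆 with ‖x‖ = ‖y‖ = 1 there exists g ∈ Spin(7) with g(x) = y. Moreover, every x ∈ 𝕆 with ‖x‖ = 1 can be written as x = u·v with u, v ∈ Im 𝕆 and ‖u‖ = ‖v‖ = 1; explicitly, if u ∈ Im 𝕆 satisfies ‖u‖ = 1 and ⟨u, Im x⟩ = 0, then v := −Re(x)·u − u·(Im x) lies in Im 𝕆, satisfies ‖v‖ = 1, and u·v = x. -/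
open scoped InnerProductSpace

/-!
For a fixed vector `x` the map `u ↦ u·x` scales the inner product by `‖x‖²`, so `u ⊥ e` forces
`⟪u·x, x⟫ = ⟪u·x, e·x⟫ = 0`: left multiplication `L_u` by an imaginary `u` is skew-adjoint. As it
also scales the inner product by `‖u‖²`, it satisfies `L_u² = -‖u‖²`. Hence, for an imaginary unit
`u`, the only `v` with `u·v = x` is `v = -u·x`, and `⟪v, e⟫ = ⟪x, u⟫` vanishes when `u ⊥ x`. As soon
as the dimension exceeds two there is a unit `u` orthogonal to both `e` and `x`, and then
`x = L_u (L_v e)` lies in the orbit of `e` under the group generated by these left multiplications.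
-/

theorem exists_norm_eq_one_forall_inner_eq_zero {𝕜 E : Type*} [RCLike 𝕜] [NormedAddCommGroup E]
    [InnerProductSpace 𝕜 E] (s : Finset E) (hs : (s.card : Cardinal) < Module.rank 𝕜 E) :
    ∃ u : E, ‖u‖ = 1 ∧ ∀ x ∈ s, ⟪u, x⟫_𝕜 = 0 := by
  have span_ne_top : Submodule.span 𝕜 (s : Set E) ≠ ⊤ := fun h ↦
    hs.not_ge <| by rw [← rank_top 𝕜 E, ← h]; exact rank_span_finset_le s
  obtain ⟨w, hw, hw0⟩ := Submodule.exists_mem_ne_zero_of_ne_bot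
    (mt (Submodule.orthogonal_eq_bot_iff (K := Submodule.span 𝕜 (s : Set E))).mp span_ne_top)
  refine ⟨(‖w‖⁻¹ : 𝕜) • w, norm_smul_inv_norm hw0, fun x hx ↦ ?_⟩
  rw [inner_smul_left, Submodule.inner_left_of_mem_orthogonal (Submodule.subset_span hx) hw,
    mul_zero]

theorem inner_map_map_of_norm_map_eq_mul {E F : Type*} [NormedAddCommGroup E]
    [InnerProductSpace ℝ E] [NormedAddCommGroup F] [InnerProductSpace ℝ F] (f : E →ₗ[ℝ] F) (c : ℝ)
    (hf : ∀ x, ‖f x‖ = c * ‖x‖) (x y : E) : ⟪f x, f y⟫_ℝ = c ^ 2 * ⟪x, y⟫_ℝ := by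
  simp only [real_inner_eq_norm_add_mul_self_sub_norm_mul_self_sub_norm_mul_self_div_two,
    ← map_add, hf]
  ring

section Composition

variable {E F : Type*} [NormedAddCommGroup E] [InnerProductSpace ℝ E] [NormedAddCommGroup F]
  [InnerProductSpace ℝ F] {mul : E →ₗ[ℝ] F →ₗ[ℝ] F} {e : E}

variable (mul e) in
/-- The group generated by the left multiplications `L_u` by unit vectors `u` orthogonal to `e`;
this is `Spin(7)` for the octonions with `e = 1`. A generator is encoded as an invertible map that
agrees pointwise with some `L_u`. -/
def imaginaryLeftMulSubgroup : Subgroup (F ≃ₗ[ℝ] F) :=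
  Subgroup.closure {g | ∃ u : E, ⟪u, e⟫_ℝ = 0 ∧ ‖u‖ = 1 ∧ ∀ x : F, g x = mul u x}

variable (unit_left : ∀ x, mul e x = x) (norm_mul : ∀ u x, ‖mul u x‖ = ‖u‖ * ‖x‖)
include unit_left norm_mul

theorem inner_imaginary_mul_left {u : E} (hu : ⟪u, e⟫_ℝ = 0) (x y : F) :
    ⟪mul u x, y⟫_ℝ = -⟪x, mul u y⟫_ℝ := by
  have inner_mul_self (z : F) : ⟪mul u z, z⟫_ℝ = 0 := calc
    ⟪mul u z, z⟫_ℝ = ⟪mul.flip z u, mul.flip z e⟫_ℝ := by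
      rw [LinearMap.flip_apply, LinearMap.flip_apply, unit_left]
    _ = ‖z‖ ^ 2 * ⟪u, e⟫_ℝ := inner_map_map_of_norm_map_eq_mul (mul.flip z) ‖z‖
      (fun v ↦ by rw [LinearMap.flip_apply, norm_mul, mul_comm]) u e
    _ = 0 := by rw [hu, mul_zero]
  have isAlt : (innerₗ F ∘ₗ mul u).IsAlt := inner_mul_self
  calc
    ⟪mul u x, y⟫_ℝ = -⟪mul u y, x⟫_ℝ := (isAlt.neg y x).symm
    _ = -⟪x, mul u y⟫_ℝ := by rw [real_inner_comm]

theorem imaginary_mul_mul_eq_neg_norm_sq_smul {u : E} (hu : ⟪u, e⟫_ℝ = 0) (x : F) :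
    mul u (mul u x) = -(‖u‖ ^ 2 • x) := by
  refine ext_inner_right ℝ fun y ↦ ?_
  rw [inner_imaginary_mul_left unit_left norm_mul hu,
    inner_map_map_of_norm_map_eq_mul (mul u) ‖u‖ (norm_mul u), inner_neg_left,
    real_inner_smul_left]

theorem imaginary_unit_mul_mul_eq_neg {u : E} (hu : ⟪u, e⟫_ℝ = 0) (hu1 : ‖u‖ = 1) (x : F) :
    mul u (mul u x) = -x := by
  rw [imaginary_mul_mul_eq_neg_norm_sq_smul unit_left norm_mul hu, hu1, one_pow, one_smul]

theorem exists_mem_imaginaryLeftMulSubgroup_forall_apply_eq_mul {u : E} (hu : ⟪u, e⟫_ℝ = 0)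
    (hu1 : ‖u‖ = 1) : ∃ g ∈ imaginaryLeftMulSubgroup mul e, ∀ x, g x = mul u x := by
  have mul_mul := imaginary_unit_mul_mul_eq_neg unit_left norm_mul hu hu1
  let g : F ≃ₗ[ℝ] F := .ofLinearMap (mul u) (-mul u) (by ext x; simp [mul_mul])
    (by ext x; simp [mul_mul])
  exact ⟨g, Subgroup.subset_closure ⟨u, hu, hu1, fun _ ↦ rfl⟩, fun _ ↦ rfl⟩

end Composition

section UnitalComposition

variable {O : Type*} [NormedAddCommGroup O] [InnerProductSpace ℝ O] {mul : O →ₗ[ℝ] O →ₗ[ℝ] O}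
  {e : O}

theorem neg_smul_sub_mul_sub_smul_unit (unit_right : ∀ x, mul x e = x) (r : ℝ) (u x : O) :
    -(r • u) - mul u (x - r • e) = -mul u x := by
  rw [map_sub, map_smul, unit_right]
  abel

variable (unit_left : ∀ x, mul e x = x) (unit_right : ∀ x, mul x e = x)
  (norm_mul : ∀ x y, ‖mul x y‖ = ‖x‖ * ‖y‖)
include unit_left unit_right norm_mul

theorem inner_neg_imaginary_mul_unit {u : O} (hu : ⟪u, e⟫_ℝ = 0) (x : O) :
    ⟪-mul u x, e⟫_ℝ = ⟪u, x⟫_ℝ := by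
  rw [inner_neg_left, inner_imaginary_mul_left unit_left norm_mul hu, neg_neg, unit_right,
    real_inner_comm]

theorem imaginary_factorization_of_inner_eq_zero {u x : O} (hu : ⟪u, e⟫_ℝ = 0) (hu1 : ‖u‖ = 1)
    (hux : ⟪u, x⟫_ℝ = 0) :
    ⟪-mul u x, e⟫_ℝ = 0 ∧ ‖-mul u x‖ = ‖x‖ ∧ mul u (-mul u x) = x := by
  refine ⟨?_, ?_, ?_⟩
  · rw [inner_neg_imaginary_mul_unit unit_left unit_right norm_mul hu, hux]
  · rw [norm_neg, norm_mul, hu1, one_mul]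
  · rw [map_neg, imaginary_unit_mul_mul_eq_neg unit_left norm_mul hu hu1, neg_neg]

theorem imaginary_factorization_of_inner_im_eq_zero {u x : O} (hu : ⟪u, e⟫_ℝ = 0)
    (hu1 : ‖u‖ = 1) (hux : ⟪u, x - ⟪x, e⟫_ℝ • e⟫_ℝ = 0) :
    ⟪-(⟪x, e⟫_ℝ • u) - mul u (x - ⟪x, e⟫_ℝ • e), e⟫_ℝ = 0 ∧
    ‖-(⟪x, e⟫_ℝ • u) - mul u (x - ⟪x, e⟫_ℝ • e)‖ = ‖x‖ ∧
    mul u (-(⟪x, e⟫_ℝ • u) - mul u (x - ⟪x, e⟫_ℝ • e)) = x := by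
  rw [inner_sub_right, real_inner_smul_right, hu, mul_zero, sub_zero] at hux
  rw [neg_smul_sub_mul_sub_smul_unit unit_right]
  exact imaginary_factorization_of_inner_eq_zero unit_left unit_right norm_mul hu hu1 hux

theorem exists_imaginary_mul_eq (hrank : 2 < Module.rank ℝ O) (x : O) :
    ∃ u v : O, ⟪u, e⟫_ℝ = 0 ∧ ⟪v, e⟫_ℝ = 0 ∧ ‖u‖ = 1 ∧ ‖v‖ = ‖x‖ ∧ mul u v = x := by
  classical
  have card_lt : (({e, x} : Finset O).card : Cardinal) < Module.rank ℝ O :=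
    lt_of_le_of_lt (mod_cast Finset.card_le_two) hrank
  obtain ⟨u, hu1, hu⟩ := exists_norm_eq_one_forall_inner_eq_zero {e, x} card_lt
  have hue : ⟪u, e⟫_ℝ = 0 := hu e (by simp)
  have hux : ⟪u, x⟫_ℝ = 0 := hu x (by simp)
  obtain ⟨hve, hv, huv⟩ :=
    imaginary_factorization_of_inner_eq_zero unit_left unit_right norm_mul hue hu1 hux
  exact ⟨u, -mul u x, hue, hve, hu1, hv, huv⟩

theorem mem_orbit_imaginaryLeftMulSubgroup_unit (hrank : 2 < Module.rank ℝ O) {x : O}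
    (hx : ‖x‖ = 1) : x ∈ MulAction.orbit (imaginaryLeftMulSubgroup mul e) e := by
  obtain ⟨u, v, hu, hv, hu1, hvx, huv⟩ :=
    exists_imaginary_mul_eq unit_left unit_right norm_mul hrank x
  obtain ⟨g, hg, hgu⟩ :=
    exists_mem_imaginaryLeftMulSubgroup_forall_apply_eq_mul unit_left norm_mul hu hu1
  obtain ⟨k, hk, hkv⟩ :=
    exists_mem_imaginaryLeftMulSubgroup_forall_apply_eq_mul unit_left norm_mul hv (hvx.trans hx)
  have apply_unit : (g * k) e = x := by rw [LinearEquiv.mul_apply, hkv, hgu, unit_right, huv]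
  exact ⟨⟨g * k, mul_mem hg hk⟩, apply_unit⟩

theorem exists_mem_imaginaryLeftMulSubgroup_apply_eq (hrank : 2 < Module.rank ℝ O) {x y : O}
    (hx : ‖x‖ = 1) (hy : ‖y‖ = 1) : ∃ g ∈ imaginaryLeftMulSubgroup mul e, g x = y := by
  have hxe : x ∈ MulAction.orbit (imaginaryLeftMulSubgroup mul e) e :=
    mem_orbit_imaginaryLeftMulSubgroup_unit unit_left unit_right norm_mul hrank hx
  have hye : y ∈ MulAction.orbit (imaginaryLeftMulSubgroup mul e) e :=
    mem_orbit_imaginaryLeftMulSubgroup_unit unit_left unit_right norm_mul hrank hy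
  rw [← MulAction.orbit_eq_iff.mpr hxe] at hye
  obtain ⟨g, hgx⟩ := hye
  exact ⟨g, g.2, hgx⟩

end UnitalComposition

theorem spin7_transitive_and_factorization_general {O : Type*} [NormedAddCommGroup O]
    [InnerProductSpace ℝ O] (hrank : 2 < Module.rank ℝ O) (mul : O →ₗ[ℝ] O →ₗ[ℝ] O) (e : O)
    (unit_left : ∀ x : O, mul e x = x) (unit_right : ∀ x : O, mul x e = x)
    (norm_mul : ∀ x y : O, ‖mul x y‖ = ‖x‖ * ‖y‖) :
    (∀ x y : O, ‖x‖ = 1 → ‖y‖ = 1 → ∃ g ∈ imaginaryLeftMulSubgroup mul e, g x = y) ∧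
    (∀ x u : O, ‖x‖ = 1 → ⟪u, e⟫_ℝ = 0 → ‖u‖ = 1 → ⟪u, x - ⟪x, e⟫_ℝ • e⟫_ℝ = 0 →
      ⟪-(⟪x, e⟫_ℝ • u) - mul u (x - ⟪x, e⟫_ℝ • e), e⟫_ℝ = 0 ∧
      ‖-(⟪x, e⟫_ℝ • u) - mul u (x - ⟪x, e⟫_ℝ • e)‖ = 1 ∧
      mul u (-(⟪x, e⟫_ℝ • u) - mul u (x - ⟪x, e⟫_ℝ • e)) = x) ∧
    (∀ x : O, ‖x‖ = 1 → ∃ u v : O, ⟪u, e⟫_ℝ = 0 ∧ ⟪v, e⟫_ℝ = 0 ∧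
      ‖u‖ = 1 ∧ ‖v‖ = 1 ∧ mul u v = x) := by
  refine ⟨fun x y hx hy ↦ ?_, fun x u hx hu hu1 hux ↦ ?_, fun x hx ↦ ?_⟩
  · exact exists_mem_imaginaryLeftMulSubgroup_apply_eq unit_left unit_right norm_mul hrank hx hy
  · rw [← hx]
    exact imaginary_factorization_of_inner_im_eq_zero unit_left unit_right norm_mul hu hu1 hux
  · simpa only [hx] using exists_imaginary_mul_eq unit_left unit_right norm_mul hrank x

/-- `Spin(7)` (the subgroup of linear automorphisms of `𝕆` generated by the
left multiplications `L_u` with `u ∈ Im 𝕆`, `‖u‖ = 1`) acts transitively on the unit sphere of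
`𝕆`; moreover every unit octonion `x` factors as `x = u·v` with `u, v` imaginary units, and
explicitly `v = -Re(x)·u - u·(Im x)` works whenever `u` is an imaginary unit orthogonal to
`Im x`. -/
theorem spin7_transitive_and_factorization
    {O : Type*} [NormedAddCommGroup O] [InnerProductSpace ℝ O]
    (hdim : Module.finrank ℝ O = 8)
    (mul : O →ₗ[ℝ] O →ₗ[ℝ] O) (e : O) (he : ‖e‖ = 1)
    (unit_left : ∀ x : O, mul e x = x) (unit_right : ∀ x : O, mul x e = x)
    (norm_mul : ∀ x y : O, ‖mul x y‖ = ‖x‖ * ‖y‖)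
    (Spin7 : Subgroup (O ≃ₗ[ℝ] O))
    (hSpin7 : Spin7 = Subgroup.closure
      {g : O ≃ₗ[ℝ] O | ∃ u : O, ⟪u, e⟫_ℝ = 0 ∧ ‖u‖ = 1 ∧ ∀ x : O, g x = mul u x}) :
    (∀ x y : O, ‖x‖ = 1 → ‖y‖ = 1 → ∃ g ∈ Spin7, g x = y) ∧
    (∀ x u : O, ‖x‖ = 1 → ⟪u, e⟫_ℝ = 0 → ‖u‖ = 1 → ⟪u, x - ⟪x, e⟫_ℝ • e⟫_ℝ = 0 →
      ⟪-(⟪x, e⟫_ℝ • u) - mul u (x - ⟪x, e⟫_ℝ • e), e⟫_ℝ = 0 ∧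
      ‖-(⟪x, e⟫_ℝ • u) - mul u (x - ⟪x, e⟫_ℝ • e)‖ = 1 ∧
      mul u (-(⟪x, e⟫_ℝ • u) - mul u (x - ⟪x, e⟫_ℝ • e)) = x) ∧
    (∀ x : O, ‖x‖ = 1 → ∃ u v : O, ⟪u, e⟫_ℝ = 0 ∧ ⟪v, e⟫_ℝ = 0 ∧
      ‖u‖ = 1 ∧ ‖v‖ = 1 ∧ mul u v = x) := by
  have hrank : 2 < Module.rank ℝ O := mod_cast Module.lt_rank_of_lt_finrank (n := 2) (by omega)
  subst hSpin7
  exact spin7_transitive_and_factorization_general hrank mul e unit_left unit_right norm_mul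
end

section
/- Every A ∈ 𝔰𝔭𝔦𝔫(9) satisfies the following relations: (1) A is skew-adjoint, i.e. ⟨A p, q⟩ = −⟨p, A q⟩ for all p, q ∈ 𝕆 ⊕ 𝕆; (2) A₁₀(y) = y·(A₁₀(1)) for all y ∈ 𝕆; (3) A₀₀(y) − y·(A₀₀(1)) = A₁₁(y) − y·(A₁₁(1)) for all y ∈ 𝕆; (4) Σ_{c=0}^{7} ⟨x·e_c, A₁₁(e_c)⟩ = 4·⟨x, A₀₀(1)⟩ for all x ∈ 𝕆. -/
open scoped InnerProductSpace

/-!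
The operators `ℐ_u (y₀, y₁) = (y₁ u, y₀ ū)` and `ℐ_∞ (y₀, y₁) = (y₀, -y₁)` form a Clifford system:
they are self-adjoint, `ℐ_u` and `ℐ_v` anticommute when `u ⟂ v`, and every `ℐ_u` anticommutes with
`ℐ_∞`. Hence their products are skew-adjoint. The product `ℐ_u ℐ_∞` exchanges the two summands,
while `ℐ_u ℐ_v` has the diagonal blocks `y ↦ (y v̄) u` and `y ↦ (y v) ū`. These blocks have the same
deviation from a right multiplication because conjugating one argument changes the sign of the
associator. The trace relation follows by polarizing `‖x y‖ = ‖x‖ ‖y‖` and summing over an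
orthonormal basis; in dimension `n` the coefficient is `n - 4`.
-/

section SkewAdjoint

variable {R M : Type*} [CommRing R] [AddCommGroup M] [Module R M]

theorem mul_mem_skewAdjointSubmodule_of_anticommute {B : LinearMap.BilinForm R M}
    {f g : Module.End R M} (hf : B.IsSelfAdjoint f) (hg : B.IsSelfAdjoint g)
    (hfg : f * g = -(g * f)) : f * g ∈ B.skewAdjointSubmodule := by
  rw [LinearMap.mem_skewAdjointSubmodule]
  intro p q
  have hgf : (g * f) q = -(f * g) q := by rw [hfg, LinearMap.neg_apply, neg_neg]
  calc B (f (g p)) q = B p ((g * f) q) := by rw [hf, hg, Module.End.mul_apply]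
    _ = B p ((-⇑(f * g)) q) := by rw [hgf, Pi.neg_apply]

end SkewAdjoint

section NormMultiplicative

variable {E F G : Type*} [NormedAddCommGroup E] [InnerProductSpace ℝ E]
  [NormedAddCommGroup F] [InnerProductSpace ℝ F] [NormedAddCommGroup G] [InnerProductSpace ℝ G]
  {B : E →ₗ[ℝ] F →ₗ[ℝ] G}

theorem inner_map_map_of_norm_map_map (hB : ∀ x y, ‖B x y‖ = ‖x‖ * ‖y‖) (x : E) (y z : F) :
    ⟪B x y, B x z⟫_ℝ = ‖x‖ ^ 2 * ⟪y, z⟫_ℝ := by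
  simp only [real_inner_eq_norm_add_mul_self_sub_norm_mul_self_sub_norm_mul_self_div_two,
    ← map_add, hB]
  ring

theorem inner_map_map_add_inner_map_map_swap (hB : ∀ x y, ‖B x y‖ = ‖x‖ * ‖y‖)
    (x z : E) (y w : F) :
    ⟪B x y, B z w⟫_ℝ + ⟪B x w, B z y⟫_ℝ = 2 * ⟪x, z⟫_ℝ * ⟪y, w⟫_ℝ := by
  have hadd := inner_map_map_of_norm_map_map hB (x + z) y w
  simp only [map_add, LinearMap.add_apply, inner_add_left, inner_add_right,
    inner_map_map_of_norm_map_map hB, norm_add_sq_real] at hadd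
  linarith [real_inner_comm (B x w) (B z y)]

end NormMultiplicative

section Conjugation

variable {O : Type*} [NormedAddCommGroup O] [InnerProductSpace ℝ O]

/-- The conjugation `x ↦ x̄` of a composition algebra with unit `e`, encoded as the orthogonal
reflection in the line `ℝ e`; see `unitConj_apply` for the usual formula. -/
noncomputable def unitConj (e : O) : O ≃ₗᵢ[ℝ] O := (ℝ ∙ e).reflection

theorem unitConj_apply {e : O} (he : ‖e‖ = 1) (x : O) :
    unitConj e x = (2 * ⟪x, e⟫_ℝ) • e - x := by
  rw [unitConj, Submodule.reflection_apply, Submodule.starProjection_unit_singleton ℝ he,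
    real_inner_comm, mul_smul, two_smul, two_smul]

theorem unitConj_unitConj (e x : O) : unitConj e (unitConj e x) = x :=
  Submodule.reflection_reflection _ x

theorem inner_unitConj_left (e x y : O) : ⟪unitConj e x, y⟫_ℝ = ⟪x, unitConj e y⟫_ℝ := by
  rw [← (unitConj e).inner_map_map, unitConj_unitConj]

end Conjugation

/-- The data of a unital real composition algebra: `mul` is a norm-multiplicative product on a real
inner product space with two-sided unit `e`. -/
structure IsUnitalComposition {O : Type*} [NormedAddCommGroup O] [InnerProductSpace ℝ O]
    (mul : O →ₗ[ℝ] O →ₗ[ℝ] O) (e : O) : Prop where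
  norm_unit : ‖e‖ = 1
  unit_mul : ∀ x, mul e x = x
  mul_unit : ∀ x, mul x e = x
  norm_mul : ∀ x y, ‖mul x y‖ = ‖x‖ * ‖y‖

namespace IsUnitalComposition

variable {O : Type*} [NormedAddCommGroup O] [InnerProductSpace ℝ O]
  {mul : O →ₗ[ℝ] O →ₗ[ℝ] O} {e : O}

local infixl:70 "⋆" => mul
local notation "κ" => unitConj e

theorem inner_mul_left (h : IsUnitalComposition mul e) (x y z : O) :
    ⟪x ⋆ y, z⟫_ℝ = ⟪y, κ x ⋆ z⟫_ℝ := by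
  have hpol := inner_map_map_add_inner_map_map_swap h.norm_mul x e y z
  simp only [h.unit_mul] at hpol
  simp only [unitConj_apply h.norm_unit, map_sub, map_smul, LinearMap.sub_apply,
    LinearMap.smul_apply, h.unit_mul, inner_sub_right, real_inner_smul_right]
  linarith [real_inner_comm (x ⋆ z) y]

theorem inner_mul_right (h : IsUnitalComposition mul e) (x y z : O) :
    ⟪x ⋆ y, z⟫_ℝ = ⟪x, z ⋆ κ y⟫_ℝ := by
  have hpol := inner_map_map_add_inner_map_map_swap h.norm_mul x z y e
  simp only [h.mul_unit] at hpol
  simp only [unitConj_apply h.norm_unit, map_sub, map_smul, h.mul_unit, inner_sub_right,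
    real_inner_smul_right]
  linarith

theorem mul_conj_mul_add_mul_conj_mul (h : IsUnitalComposition mul e) (x u v : O) :
    x ⋆ κ u ⋆ v + x ⋆ κ v ⋆ u = (2 * ⟪u, v⟫_ℝ) • x := by
  refine ext_inner_right ℝ fun w => ?_
  rw [inner_add_left, h.inner_mul_right _ v, h.inner_mul_right _ u,
    inner_map_map_add_inner_map_map_swap h.norm_mul, LinearIsometryEquiv.inner_map_map,
    real_inner_smul_left]
  ring

theorem mul_conj_mul_eq_neg (h : IsUnitalComposition mul e) {u v : O} (huv : ⟪u, v⟫_ℝ = 0)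
    (x : O) : x ⋆ κ u ⋆ v = -(x ⋆ κ v ⋆ u) := by
  rw [eq_neg_iff_add_eq_zero, h.mul_conj_mul_add_mul_conj_mul, huv, mul_zero, zero_smul]

theorem mul_mul_conj_eq_neg (h : IsUnitalComposition mul e) {u v : O} (huv : ⟪u, v⟫_ℝ = 0)
    (x : O) : x ⋆ u ⋆ κ v = -(x ⋆ v ⋆ κ u) := by
  simpa only [unitConj_unitConj] using
    h.mul_conj_mul_eq_neg (((κ).inner_map_map u v).trans huv) x

theorem mul_conj_mul_self (h : IsUnitalComposition mul e) (x u : O) :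
    x ⋆ κ u ⋆ u = ‖u‖ ^ 2 • x := by
  refine smul_right_injective O (two_ne_zero : (2 : ℝ) ≠ 0) ?_
  simpa only [two_smul, mul_smul, real_inner_self_eq_norm_sq] using
    h.mul_conj_mul_add_mul_conj_mul x u u

theorem conj_mul (h : IsUnitalComposition mul e) (x y : O) : κ (x ⋆ y) = κ y ⋆ κ x := by
  refine ext_inner_right ℝ fun w => ?_
  calc ⟪κ (x ⋆ y), w⟫_ℝ = ⟪y, κ x ⋆ κ w⟫_ℝ := by rw [inner_unitConj_left, h.inner_mul_left]
    _ = ⟪y ⋆ w, κ x⟫_ℝ := (h.inner_mul_right y w (κ x)).symm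
    _ = ⟪w, κ y ⋆ κ x⟫_ℝ := h.inner_mul_left y w (κ x)
    _ = ⟪κ y ⋆ κ x, w⟫_ℝ := real_inner_comm _ _

theorem mul_mul_self (h : IsUnitalComposition mul e) (x y : O) :
    x ⋆ y ⋆ x = (2 * ⟪x, κ y⟫_ℝ) • x - ‖x‖ ^ 2 • κ y := by
  have hxy : x ⋆ y = (2 * ⟪x, κ y⟫_ℝ) • e - κ y ⋆ κ x := by
    have hconj := unitConj_apply h.norm_unit (κ (x ⋆ y))
    rwa [unitConj_unitConj, h.conj_mul, h.inner_mul_right, unitConj_unitConj, h.unit_mul,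
      real_inner_comm] at hconj
  rw [hxy]
  simp only [map_sub, map_smul, LinearMap.sub_apply, LinearMap.smul_apply, h.unit_mul,
    h.mul_conj_mul_self]

/-- The associator vanishes when one of its arguments is the unit, so it changes sign under
conjugation of either argument. -/
theorem mul_conj_mul_sub (h : IsUnitalComposition mul e) (x y z : O) :
    x ⋆ κ y ⋆ z - x ⋆ (κ y ⋆ z) = x ⋆ y ⋆ κ z - x ⋆ (y ⋆ κ z) := by
  simp only [unitConj_apply h.norm_unit, map_sub, map_smul, LinearMap.sub_apply,
    LinearMap.smul_apply, h.unit_mul, h.mul_unit]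
  module

variable {ι : Type*} [Fintype ι]

theorem sum_inner_mul_mul_mul (h : IsUnitalComposition mul e) (b : OrthonormalBasis ι ℝ O)
    (x y z : O) :
    ∑ i, ⟪x ⋆ b i, b i ⋆ y ⋆ z⟫_ℝ
      = 2 * ⟪x ⋆ κ y, z⟫_ℝ + (Fintype.card ι - 2) * ⟪x ⋆ z, κ y⟫_ℝ := by
  have hterm (i : ι) : ⟪x ⋆ b i, b i ⋆ y ⋆ z⟫_ℝ
      = 2 * (⟪x ⋆ κ y, b i⟫_ℝ * ⟪b i, z⟫_ℝ) - 2 * (⟪x ⋆ z, b i⟫_ℝ * ⟪b i, κ y⟫_ℝ)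
        + ⟪x ⋆ z, κ y⟫_ℝ := by
    have hpol := inner_map_map_add_inner_map_map_swap h.norm_mul x (b i ⋆ y) (b i) z
    have hxy : ⟪x, b i ⋆ y⟫_ℝ = ⟪x ⋆ κ y, b i⟫_ℝ := by
      rw [h.inner_mul_right, unitConj_unitConj]
    rw [h.mul_mul_self, b.norm_eq_one, one_pow, one_smul, inner_sub_right, real_inner_smul_right,
      hxy] at hpol
    linarith
  simp only [hterm, Finset.sum_add_distrib, Finset.sum_sub_distrib, ← Finset.mul_sum,
    b.sum_inner_mul_inner, Finset.sum_const, Finset.card_univ, nsmul_eq_mul]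
  ring

theorem sum_inner_mul_mul_mul_conj (h : IsUnitalComposition mul e) (b : OrthonormalBasis ι ℝ O)
    {u v : O} (huv : ⟪u, v⟫_ℝ = 0) (x : O) :
    ∑ i, ⟪x ⋆ b i, b i ⋆ v ⋆ κ u⟫_ℝ = (Fintype.card ι - 4) * ⟪x, κ v ⋆ u⟫_ℝ := by
  have hanti : κ u ⋆ v = -(κ v ⋆ u) := by
    simpa only [h.unit_mul] using h.mul_conj_mul_eq_neg huv e
  rw [h.sum_inner_mul_mul_mul, h.inner_mul_right x (κ v), h.inner_mul_right x (κ u),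
    unitConj_unitConj, unitConj_unitConj, hanti, inner_neg_right]
  ring

end IsUnitalComposition

section Operators

variable {O : Type*} [NormedAddCommGroup O] [InnerProductSpace ℝ O]

variable (O) in
/-- The direct-sum inner product on `O ⊕ O`, as a bilinear form because the norm of the type `O × O`
is the supremum norm. -/
noncomputable def prodInner : LinearMap.BilinForm ℝ (O × O) :=
  (innerₗ O).compl₁₂ (.fst ℝ O O) (.fst ℝ O O) + (innerₗ O).compl₁₂ (.snd ℝ O O) (.snd ℝ O O)

theorem prodInner_apply (p q : O × O) :
    prodInner O p q = ⟪p.1, q.1⟫_ℝ + ⟪p.2, q.2⟫_ℝ := rfl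

/-- The operator `ℐ_u (y₀, y₁) = (y₁ u, y₀ ū)`, for an arbitrary vector `u`. -/
noncomputable def cliffordOp (mul : O →ₗ[ℝ] O →ₗ[ℝ] O) (e u : O) : Module.End ℝ (O × O) :=
  (mul.flip u ∘ₗ .snd ℝ O O).prod (mul.flip (unitConj e u) ∘ₗ .fst ℝ O O)

variable (O) in
/-- The operator `ℐ_∞ (y₀, y₁) = (y₀, -y₁)`, which is `ℐ₈` when `O` has dimension `8`. -/
def gradingOp : Module.End ℝ (O × O) := LinearMap.id.prodMap (-LinearMap.id)

theorem cliffordOp_apply (mul : O →ₗ[ℝ] O →ₗ[ℝ] O) (e u : O) (y : O × O) :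
    cliffordOp mul e u y = (mul y.2 u, mul y.1 (unitConj e u)) := rfl

theorem gradingOp_apply (y : O × O) : gradingOp O y = (y.1, -y.2) := rfl

theorem isSelfAdjoint_gradingOp : (prodInner O).IsSelfAdjoint (gradingOp O) := fun p q => by
  simp only [prodInner_apply, gradingOp_apply, inner_neg_left, inner_neg_right]

theorem cliffordOp_mul_gradingOp (mul : O →ₗ[ℝ] O →ₗ[ℝ] O) (e u : O) :
    cliffordOp mul e u * gradingOp O = -(gradingOp O * cliffordOp mul e u) :=
  LinearMap.ext fun y => by
    simp [cliffordOp_apply, gradingOp_apply]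

namespace IsUnitalComposition

variable {mul : O →ₗ[ℝ] O →ₗ[ℝ] O} {e : O}

theorem isSelfAdjoint_cliffordOp (h : IsUnitalComposition mul e) (u : O) :
    (prodInner O).IsSelfAdjoint (cliffordOp mul e u) := fun p q => by
  simp only [prodInner_apply, cliffordOp_apply, h.inner_mul_right, unitConj_unitConj]
  exact add_comm _ _

theorem cliffordOp_mul_cliffordOp (h : IsUnitalComposition mul e) {u v : O}
    (huv : ⟪u, v⟫_ℝ = 0) :
    cliffordOp mul e u * cliffordOp mul e v = -(cliffordOp mul e v * cliffordOp mul e u) :=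
  LinearMap.ext fun y => Prod.ext
    (h.mul_conj_mul_eq_neg (inner_eq_zero_symm.1 huv) y.1)
    (h.mul_mul_conj_eq_neg (inner_eq_zero_symm.1 huv) y.2)

end IsUnitalComposition

variable {ι : Type*} [Fintype ι]

/-- The operators on `O ⊕ O` whose blocks satisfy the relations (2)–(4) of `𝔰𝔭𝔦𝔫(9)`, with the
coefficient `4 = 8 - 4` of (4) replaced by `dim O - 4`. -/
def blockRelations (mul : O →ₗ[ℝ] O →ₗ[ℝ] O) (e : O) (b : OrthonormalBasis ι ℝ O) :
    Submodule ℝ (Module.End ℝ (O × O)) where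
  carrier := {A |
    (∀ y, (A (y, 0)).2 = mul y (A (e, 0)).2) ∧
    (∀ y, (A (y, 0)).1 - mul y (A (e, 0)).1 = (A (0, y)).2 - mul y (A (0, e)).2) ∧
    (∀ x, ∑ i, ⟪mul x (b i), (A (0, b i)).2⟫_ℝ = (Fintype.card ι - 4) * ⟪x, (A (e, 0)).1⟫_ℝ)}
  zero_mem' := by simp
  add_mem' := by
    rintro A A' ⟨hoff, hdiag, htrace⟩ ⟨hoff', hdiag', htrace'⟩
    refine ⟨fun y => ?_, fun y => ?_, fun x => ?_⟩
    · simp only [LinearMap.add_apply, Prod.snd_add, map_add, ← hoff, ← hoff']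
    · simp only [LinearMap.add_apply, Prod.fst_add, Prod.snd_add, map_add, add_sub_add_comm,
        hdiag, hdiag']
    · simp only [LinearMap.add_apply, Prod.fst_add, Prod.snd_add, inner_add_right,
        Finset.sum_add_distrib, htrace, htrace', mul_add]
  smul_mem' := by
    rintro r A ⟨hoff, hdiag, htrace⟩
    refine ⟨fun y => ?_, fun y => ?_, fun x => ?_⟩
    · simp only [LinearMap.smul_apply, Prod.smul_snd, map_smul, ← hoff]
    · simp only [LinearMap.smul_apply, Prod.smul_fst, Prod.smul_snd, map_smul, ← smul_sub, hdiag]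
    · simp only [LinearMap.smul_apply, Prod.smul_fst, Prod.smul_snd, real_inner_smul_right,
        ← Finset.mul_sum, htrace, mul_left_comm]

namespace IsUnitalComposition

variable {mul : O →ₗ[ℝ] O →ₗ[ℝ] O} {e : O}

theorem cliffordOp_mul_cliffordOp_mem_blockRelations (h : IsUnitalComposition mul e)
    (b : OrthonormalBasis ι ℝ O) {u v : O} (huv : ⟪u, v⟫_ℝ = 0) :
    cliffordOp mul e u * cliffordOp mul e v ∈ blockRelations mul e b := by
  refine ⟨fun y => ?_, fun y => ?_, fun x => ?_⟩
  · simp [cliffordOp_apply]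
  · simpa only [Module.End.mul_apply, cliffordOp_apply, h.unit_mul] using h.mul_conj_mul_sub y v u
  · simpa only [Module.End.mul_apply, cliffordOp_apply, h.unit_mul] using
      h.sum_inner_mul_mul_mul_conj b huv x

theorem cliffordOp_mul_gradingOp_mem_blockRelations (h : IsUnitalComposition mul e)
    (b : OrthonormalBasis ι ℝ O) (u : O) :
    cliffordOp mul e u * gradingOp O ∈ blockRelations mul e b := by
  refine ⟨fun y => ?_, fun y => ?_, fun x => ?_⟩ <;>
    simp [cliffordOp_apply, gradingOp_apply, h.unit_mul]

theorem span_mul_le_skewAdjointSubmodule_inf_blockRelations (h : IsUnitalComposition mul e)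
    {n : ℕ} (b : OrthonormalBasis (Fin n) ℝ O) {J : Fin (n + 1) → Module.End ℝ (O × O)}
    (hJ : ∀ i : Fin n, J i.castSucc = cliffordOp mul e (b i))
    (hJ_last : J (Fin.last n) = gradingOp O) :
    Submodule.span ℝ {A | ∃ i j : Fin (n + 1), i < j ∧ A = J i * J j}
      ≤ (prodInner O).skewAdjointSubmodule ⊓ blockRelations mul e b := by
  refine Submodule.span_le.2 ?_
  rintro _ ⟨i, j, hij, rfl⟩
  obtain ⟨i, rfl⟩ := Fin.exists_castSucc_eq.2 (Fin.ne_last_of_lt hij)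
  rcases Fin.eq_castSucc_or_eq_last j with ⟨j, rfl⟩ | rfl
  · have hb : ⟪b i, b j⟫_ℝ = 0 := b.inner_eq_zero (Fin.castSucc_lt_castSucc_iff.1 hij).ne
    rw [hJ, hJ]
    exact ⟨mul_mem_skewAdjointSubmodule_of_anticommute (h.isSelfAdjoint_cliffordOp _)
      (h.isSelfAdjoint_cliffordOp _) (h.cliffordOp_mul_cliffordOp hb),
      h.cliffordOp_mul_cliffordOp_mem_blockRelations b hb⟩
  · rw [hJ, hJ_last]
    exact ⟨mul_mem_skewAdjointSubmodule_of_anticommute (h.isSelfAdjoint_cliffordOp _)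
      isSelfAdjoint_gradingOp (cliffordOp_mul_gradingOp mul e _),
      h.cliffordOp_mul_gradingOp_mem_blockRelations b _⟩

end IsUnitalComposition

end Operators

theorem spin9_lie_algebra_relations_general
    {O : Type*} [NormedAddCommGroup O] [InnerProductSpace ℝ O]
    {mul : O →ₗ[ℝ] O →ₗ[ℝ] O} {e : O} (h : IsUnitalComposition mul e)
    {n : ℕ} (b : OrthonormalBasis (Fin n) ℝ O) {J : Fin (n + 1) → Module.End ℝ (O × O)}
    (hJ : ∀ i : Fin n, J i.castSucc = cliffordOp mul e (b i))
    (hJ_last : J (Fin.last n) = gradingOp O) {A : Module.End ℝ (O × O)}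
    (hA : A ∈ Submodule.span ℝ {A | ∃ i j : Fin (n + 1), i < j ∧ A = J i * J j}) :
    (∀ p q : O × O,
      ⟪(A p).1, q.1⟫_ℝ + ⟪(A p).2, q.2⟫_ℝ = -(⟪p.1, (A q).1⟫_ℝ + ⟪p.2, (A q).2⟫_ℝ)) ∧
    (∀ y, (A (y, 0)).2 = mul y (A (e, 0)).2) ∧
    (∀ y, (A (y, 0)).1 - mul y (A (e, 0)).1 = (A (0, y)).2 - mul y (A (0, e)).2) ∧
    (∀ x, ∑ i, ⟪mul x (b i), (A (0, b i)).2⟫_ℝ = (n - 4) * ⟪x, (A (e, 0)).1⟫_ℝ) := by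
  obtain ⟨hskew, hoff, hdiag, htrace⟩ :=
    h.span_mul_le_skewAdjointSubmodule_inf_blockRelations b hJ hJ_last hA
  refine ⟨fun p q => ?_, hoff, hdiag, by simpa only [Fintype.card_fin] using htrace⟩
  have hpq := (LinearMap.mem_skewAdjointSubmodule A).1 hskew p q
  rwa [Pi.neg_apply, map_neg, prodInner_apply, prodInner_apply] at hpq

/-- Every element `A` of the Lie algebra `𝔰𝔭𝔦𝔫(9)` (the span of the
compositions `ℐ_i ∘ ℐ_j`, `i < j`, of the operators `ℐ_i(y₀,y₁) = (y₁·e_i, y₀·ē_i)` and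
`ℐ₈(y₀,y₁) = (y₀, -y₁)` on `𝕆 ⊕ 𝕆`) is skew-adjoint and its blocks satisfy the relations
`A₁₀(y) = y·A₁₀(1)`, `A₀₀(y) − y·A₀₀(1) = A₁₁(y) − y·A₁₁(1)` and
`Σ_c ⟨x e_c, A₁₁ e_c⟩ = 4⟨x, A₀₀(1)⟩`. -/
theorem spin9_lie_algebra_relations
    {O : Type*} [NormedAddCommGroup O] [InnerProductSpace ℝ O]
    (hdim : Module.finrank ℝ O = 8)
    (mul : O →ₗ[ℝ] O →ₗ[ℝ] O) (e : O) (he : ‖e‖ = 1)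
    (unit_left : ∀ x : O, mul e x = x) (unit_right : ∀ x : O, mul x e = x)
    (norm_mul : ∀ x y : O, ‖mul x y‖ = ‖x‖ * ‖y‖)
    (conj : O → O) (hconj : ∀ x : O, conj x = (2 * ⟪x, e⟫_ℝ) • e - x)
    (b : OrthonormalBasis (Fin 8) ℝ O) (hb : b 0 = e)
    (J : Fin 9 → ((O × O) →ₗ[ℝ] (O × O)))
    (hJ : ∀ (i : Fin 8) (y : O × O),
      J i.castSucc y = (mul y.2 (b i), mul y.1 (conj (b i))))
    (hJ8 : ∀ y : O × O, J 8 y = (y.1, -y.2))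
    (spin9 : Submodule ℝ ((O × O) →ₗ[ℝ] (O × O)))
    (hspin9 : spin9 = Submodule.span ℝ
      {A : (O × O) →ₗ[ℝ] (O × O) | ∃ i j : Fin 9, i < j ∧ A = (J i).comp (J j)}) :
    ∀ A ∈ spin9,
      (∀ p q : O × O,
        ⟪(A p).1, q.1⟫_ℝ + ⟪(A p).2, q.2⟫_ℝ = -(⟪p.1, (A q).1⟫_ℝ + ⟪p.2, (A q).2⟫_ℝ)) ∧
      (∀ y : O, (A (y, (0 : O))).2 = mul y ((A (e, (0 : O))).2)) ∧
      (∀ y : O, (A (y, (0 : O))).1 - mul y ((A (e, (0 : O))).1)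
        = (A ((0 : O), y)).2 - mul y ((A ((0 : O), e)).2)) ∧
      (∀ x : O, ∑ c : Fin 8, ⟪mul x (b c), (A ((0 : O), b c)).2⟫_ℝ
        = 4 * ⟪x, (A (e, (0 : O))).1⟫_ℝ) := by
  subst hspin9
  intro A hA
  have h : IsUnitalComposition mul e := ⟨he, unit_left, unit_right, norm_mul⟩
  have hJ_castSucc (i : Fin 8) : J i.castSucc = cliffordOp mul e (b i) :=
    LinearMap.ext fun y => by rw [hJ, cliffordOp_apply, hconj, unitConj_apply he]
  have hgen := spin9_lie_algebra_relations_general h b hJ_castSucc (LinearMap.ext hJ8) hA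
  rwa [show ((8 : ℕ) : ℝ) - 4 = 4 by norm_num] at hgen
end
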